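/- arXiv:2605.08982 — 8 statements merged into one kernel-verified Lean document; each statement's English description precedes it below -/
import Mathlib

section
/- Let A be a finite nonempty type, let p : A → ℝ be a probability vector with full support (p(a) > 0 for all a and ∑_a p(a) = 1), let q : A → ℝ, and let β ≥ 0. Then the exponentially tilted distribution p_β satisfies ∑_a p_β(a)·q(a) ≥ ∑_a p(a)·q(a); that is, tilting a prior policy by the exponential of β times the action values does not decrease the expected action value (the greedification property of the regularized policy improvement operator π(a) ∝ π_θ(a)·exp(β·q(a))). -/
/-!
Let `m = ∑ a, p a * q a`. Since `β ≥ 0`, the function `t ↦ exp (β * t)` is nondecreasing, so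
`exp (β * m) * (t - m) ≤ exp (β * t) * (t - m)` for every real `t`. Averaging this at `t = q a`
against `p` makes the left-hand side vanish, so the unnormalized tilted weights give `q - m` a
nonnegative sum. Dividing by the positive normalizing constant gives the claim.
-/

/-- Tilting a full-support prior `p` by `exp (β * q)` with `β ≥ 0` does not
decrease the expected value of `q` (greedification property of the
regularized policy improvement operator). -/
theorem tilted_expectation_ge {A : Type*} [Fintype A] [Nonempty A]
    (p q : A → ℝ) (β : ℝ)
    (hp : ∀ a, 0 < p a) (hsum : ∑ a, p a = 1) (hβ : 0 ≤ β) :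
    ∑ a, (p a * Real.exp (β * q a) / ∑ b, p b * Real.exp (β * q b)) * q a
      ≥ ∑ a, p a * q a := by
  have hZ : 0 < ∑ b, p b * Real.exp (β * q b) :=
    Finset.sum_pos (fun b _ => mul_pos (hp b) (Real.exp_pos _)) Finset.univ_nonempty
  obtain ⟨m, hm⟩ : ∃ m, m = ∑ a, p a * q a := ⟨_, rfl⟩
  have key (t : ℝ) : Real.exp (β * m) * (t - m) ≤ Real.exp (β * t) * (t - m) := by
    rcases le_total m t with h | h
    · exact mul_le_mul_of_nonneg_right (by gcongr) (sub_nonneg.2 h)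
    · exact mul_le_mul_of_nonpos_right (by gcongr) (sub_nonpos.2 h)
  have hcenter : ∑ a, p a * (Real.exp (β * m) * (q a - m)) = 0 := by
    calc ∑ a, p a * (Real.exp (β * m) * (q a - m))
        = Real.exp (β * m) * (∑ a, p a * q a - (∑ a, p a) * m) := by
          rw [Finset.sum_mul, ← Finset.sum_sub_distrib, Finset.mul_sum]
          exact Finset.sum_congr rfl fun a _ => by ring
      _ = 0 := by rw [hsum, ← hm]; ring
  have hnonneg : 0 ≤ ∑ a, p a * (Real.exp (β * q a) * (q a - m)) :=
    hcenter.ge.trans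
      (Finset.sum_le_sum fun a _ => mul_le_mul_of_nonneg_left (key (q a)) (hp a).le)
  have hsplit : ∑ a, p a * (Real.exp (β * q a) * (q a - m))
      = ∑ a, p a * Real.exp (β * q a) * q a - m * ∑ b, p b * Real.exp (β * q b) := by
    rw [Finset.mul_sum, ← Finset.sum_sub_distrib]
    exact Finset.sum_congr rfl fun a _ => by ring
  simp_rw [div_mul_eq_mul_div]
  rw [← Finset.sum_div, ge_iff_le, ← hm, le_div_iff₀ hZ]
  linarith
end

section
/- Let A be a finite nonempty type, let p : A → ℝ be a probability vector with full support, let q : A → ℝ, and let β > 0. If q is not constant on A (there exist a, b ∈ A with q(a) ≠ q(b)), then the exponentially tilted distribution p_β satisfies the strict inequality ∑_a p_β(a)·q(a) > ∑_a p(a)·q(a). -/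
/-!
Let `m` be the mean of `q` under `p`. Each product `(exp (β q a) - exp (β m)) * (q a - m)` is
nonnegative, and positive when `q a ≠ m`, because `x ↦ exp (β x)` is strictly increasing; since `q`
is not constant, some `a` has `q a ≠ m`. Averaging against `p`, the `exp (β m)` part vanishes as
`∑ p a (q a - m) = 0`, which leaves `∑ p a exp (β q a) (q a - m) > 0`. Dividing by the
normalizing constant gives the claim.
-/

lemma exp_sub_mul_sub_pos {β x m : ℝ} (hβ : 0 < β) (h : x ≠ m) :
    0 < (Real.exp (β * x) - Real.exp (β * m)) * (x - m) := by
  rcases lt_or_gt_of_ne h with h | h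
  · exact mul_pos_of_neg_of_neg
      (sub_neg.2 (Real.exp_lt_exp.2 (mul_lt_mul_of_pos_left h hβ))) (sub_neg.2 h)
  · exact mul_pos
      (sub_pos.2 (Real.exp_lt_exp.2 (mul_lt_mul_of_pos_left h hβ))) (sub_pos.2 h)

/-- If `β > 0` and `q` is not constant, tilting a full-support prior `p` by
`exp (β * q)` strictly increases the expected value of `q`. -/
theorem tilted_expectation_gt {A : Type*} [Fintype A] [Nonempty A]
    (p q : A → ℝ) (β : ℝ)
    (hp : ∀ a, 0 < p a) (hsum : ∑ a, p a = 1) (hβ : 0 < β)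
    (hq : ∃ a b, q a ≠ q b) :
    ∑ a, (p a * Real.exp (β * q a) / ∑ b, p b * Real.exp (β * q b)) * q a
      > ∑ a, p a * q a := by
  obtain ⟨m, hm⟩ : ∃ m, m = ∑ a, p a * q a := ⟨_, rfl⟩
  have hZ : 0 < ∑ b, p b * Real.exp (β * q b) :=
    Finset.sum_pos (fun b _ => mul_pos (hp b) (Real.exp_pos _)) Finset.univ_nonempty
  obtain ⟨c, hc⟩ : ∃ c, q c ≠ m := by
    obtain ⟨a, b, hab⟩ := hq
    by_contra! h
    exact hab ((h a).trans (h b).symm)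
  have hpos : 0 < ∑ a, p a * ((Real.exp (β * q a) - Real.exp (β * m)) * (q a - m)) := by
    refine Finset.sum_pos' (fun a _ => mul_nonneg (hp a).le ?_)
      ⟨c, Finset.mem_univ c, mul_pos (hp c) (exp_sub_mul_sub_pos hβ hc)⟩
    by_cases h : q a = m
    · simp [h]
    · exact (exp_sub_mul_sub_pos hβ h).le
  have hexpand : ∑ a, p a * ((Real.exp (β * q a) - Real.exp (β * m)) * (q a - m))
      = ∑ a, p a * Real.exp (β * q a) * q a - m * ∑ a, p a * Real.exp (β * q a)
        - Real.exp (β * m) * (∑ a, p a * q a - m * ∑ a, p a) := by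
    simp only [Finset.mul_sum, ← Finset.sum_sub_distrib]
    exact Finset.sum_congr rfl fun a _ => by ring
  rw [hexpand, hsum, ← hm, mul_one, sub_self, mul_zero, sub_zero, sub_pos] at hpos
  simp only [div_mul_eq_mul_div]
  rw [← Finset.sum_div, ← hm, gt_iff_lt, lt_div_iff₀ hZ]
  exact hpos
end

section
/- Let A be a finite nonempty type, let p : A → ℝ be a probability vector with full support, and let q : A → ℝ. Then the tilted expected value β ↦ ∑_a p_β(a)·q(a) is monotone nondecreasing in β: for all real β₁ ≤ β₂, ∑_a p_{β₁}(a)·q(a) ≤ ∑_a p_{β₂}(a)·q(a). -/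
/-!
Let `u` and `v` be the unnormalized tilted weights at `β₁ ≤ β₂`. After clearing the positive
normalizing sums, the claim is `(∑ u q) (∑ v) ≤ (∑ v q) (∑ u)`. Symmetrizing in two
independent indices, twice the difference of the two sides is
`∑ a, ∑ b, (v a * u b - v b * u a) * (q a - q b)`, and each summand is nonnegative because the
likelihood ratio `v / u = exp ((β₂ - β₁) q)` is a nondecreasing function of `q`
(`tilted_pair_nonneg`).
-/

lemma tilted_pair_nonneg {s t x y β₁ β₂ : ℝ} (hs : 0 ≤ s) (ht : 0 ≤ t) (h : β₁ ≤ β₂) :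
    0 ≤ ((s * Real.exp (β₂ * x)) * (t * Real.exp (β₁ * y))
      - (t * Real.exp (β₂ * y)) * (s * Real.exp (β₁ * x))) * (x - y) := by
  have key : ((s * Real.exp (β₂ * x)) * (t * Real.exp (β₁ * y))
      - (t * Real.exp (β₂ * y)) * (s * Real.exp (β₁ * x))) * (x - y)
      = s * t * ((Real.exp (β₂ * x + β₁ * y) - Real.exp (β₂ * y + β₁ * x)) * (x - y)) := by
    rw [Real.exp_add, Real.exp_add]; ring
  rw [key]
  refine mul_nonneg (mul_nonneg hs ht) ?_
  rcases le_total x y with hxy | hxy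
  · refine mul_nonneg_of_nonpos_of_nonpos (sub_nonpos.2 (Real.exp_le_exp.2 ?_))
      (sub_nonpos.2 hxy)
    nlinarith [mul_nonneg (sub_nonneg.2 h) (sub_nonneg.2 hxy)]
  · refine mul_nonneg (sub_nonneg.2 (Real.exp_le_exp.2 ?_)) (sub_nonneg.2 hxy)
    nlinarith [mul_nonneg (sub_nonneg.2 h) (sub_nonneg.2 hxy)]

/-- The symmetrization identity behind Chebyshev's sum inequality. -/
lemma two_mul_weighted_sum_sub {A : Type*} [Fintype A] (u v q : A → ℝ) :
    2 * ((∑ a, v a * q a) * ∑ a, u a - (∑ a, u a * q a) * ∑ a, v a)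
      = ∑ a, ∑ b, (v a * u b - v b * u a) * (q a - q b) := by
  have expand : ∀ a b, (v a * u b - v b * u a) * (q a - q b)
      = (v a * q a) * u b - v a * (u b * q b) - (u a * q a) * v b + u a * (v b * q b) :=
    fun a b => by ring
  simp only [expand, Finset.sum_add_distrib, Finset.sum_sub_distrib, ← Finset.sum_mul_sum]
  ring

/-- The tilted expected value `β ↦ ∑ a, p_β a * q a` is monotone
nondecreasing in the inverse temperature `β`. -/
theorem tilted_expectation_monotone {A : Type*} [Fintype A] [Nonempty A]
    (p q : A → ℝ)
    (hp : ∀ a, 0 < p a) (hsum : ∑ a, p a = 1) :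
    ∀ β₁ β₂ : ℝ, β₁ ≤ β₂ →
      ∑ a, (p a * Real.exp (β₁ * q a) / ∑ b, p b * Real.exp (β₁ * q b)) * q a
        ≤ ∑ a, (p a * Real.exp (β₂ * q a) / ∑ b, p b * Real.exp (β₂ * q b)) * q a := by
  intro β₁ β₂ h
  have hZ : ∀ β : ℝ, 0 < ∑ b, p b * Real.exp (β * q b) := fun β =>
    Finset.sum_pos (fun a _ => mul_pos (hp a) (Real.exp_pos _)) Finset.univ_nonempty
  simp only [div_mul_eq_mul_div, ← Finset.sum_div]
  rw [div_le_div_iff₀ (hZ β₁) (hZ β₂)]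
  have hsymm := two_mul_weighted_sum_sub (fun a => p a * Real.exp (β₁ * q a))
    (fun a => p a * Real.exp (β₂ * q a)) q
  have hnonneg := Finset.sum_nonneg fun a (_ : a ∈ Finset.univ) =>
    Finset.sum_nonneg fun b (_ : b ∈ Finset.univ) =>
      tilted_pair_nonneg (x := q a) (y := q b) (hp a).le (hp b).le h
  rw [← hsymm] at hnonneg
  linarith
end

section
/- Let A be a finite nonempty type, let p : A → ℝ be a probability vector, and let η ≥ 1. Let p^(η) be the tempered distribution p^(η)(a) = p(a)^{1/η} / ∑_b p(b)^{1/η}. Then the Shannon entropy of the tempered distribution is at least that of p: −∑_a p^(η)(a)·log p^(η)(a) ≥ −∑_a p(a)·log p(a) (with the convention 0·log 0 = 0). In particular, the proposal policy π̂(a) ∝ π(a)^{1/η} used for weighted selection has entropy at least that of the target policy π. -/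
/-!
Write `s = 1 / η ∈ (0, 1]`, `Z = ∑ b, p b ^ s`, `r a = p a ^ s / Z`, `L = ∑ p log p` and
`M = ∑ r log p`. On the common support of `p` and `r` one has `log r = s log p - log Z`, so Gibbs'
inequality (`sum_mul_log_le_sum_mul_log_self`), applied in both directions, reads
* `s L - log Z ≤ L`, i.e. `(s - 1) L ≤ log Z` (from `KL(p ‖ r) ≥ 0`),
* `M ≤ s M - log Z`, i.e. `log Z ≤ (s - 1) M` (from `KL(r ‖ p) ≥ 0`).

Hence `M ≤ L` when `s < 1`, and `H(r) = -s M + log Z ≥ -s L + (s - 1) L = -L = H(p)`.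
For `s = 1`, `r = p`.
-/

/-- Gibbs' inequality for finite probability vectors. The support condition excludes the case of
infinite relative entropy, which the value `Real.log 0 = 0` would misrepresent. -/
theorem sum_mul_log_le_sum_mul_log_self {A : Type*} [Fintype A] (q w : A → ℝ)
    (hq : ∀ a, 0 ≤ q a) (hw : ∀ a, 0 ≤ w a) (hqs : ∑ a, q a = 1) (hws : ∑ a, w a = 1)
    (hsupp : ∀ a, w a = 0 → q a = 0) :
    ∑ a, q a * Real.log (w a) ≤ ∑ a, q a * Real.log (q a) := by
  have key : ∀ a, q a * Real.log (w a) - q a * Real.log (q a) ≤ w a - q a := by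
    intro a
    rcases (hq a).eq_or_lt with h | h
    · simpa [← h] using hw a
    · have hwa : 0 < w a := (hw a).lt_of_ne fun h0 => h.ne' (hsupp a h0.symm)
      have h1 := Real.log_le_sub_one_of_pos (div_pos hwa h)
      rw [Real.log_div hwa.ne' h.ne'] at h1
      have h2 := mul_le_mul_of_nonneg_left h1 h.le
      have h3 : q a * (w a / q a - 1) = w a - q a := by field_simp
      linarith
  have h := Finset.sum_le_sum fun a (_ : a ∈ Finset.univ) => key a
  simp only [Finset.sum_sub_distrib, hqs, hws] at h
  linarith

/-- Tempering a probability vector `p` with temperature `η ≥ 1`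
(`p^(η)(a) ∝ p(a)^(1/η)`) does not decrease its Shannon entropy
`H(r) = -∑ a, r a * log (r a)` (with the convention `0 * log 0 = 0`,
which holds automatically since `Real.log 0 = 0`). -/
theorem tempered_entropy_ge {A : Type*} [Fintype A] [Nonempty A]
    (p : A → ℝ) (η : ℝ)
    (hp : ∀ a, 0 ≤ p a) (hsum : ∑ a, p a = 1) (hη : 1 ≤ η) :
    -∑ a, (p a ^ (1 / η) / ∑ b, p b ^ (1 / η)) *
        Real.log (p a ^ (1 / η) / ∑ b, p b ^ (1 / η))
      ≥ -∑ a, p a * Real.log (p a) := by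
  have hs0 : 0 < 1 / η := by positivity
  have hs1 : 1 / η ≤ 1 := by
    rw [div_le_one (by linarith)]
    exact hη
  generalize 1 / η = s at hs0 hs1 ⊢
  rcases hs1.eq_or_lt with rfl | hs1
  · simp [hsum]
  have hZ : 0 < ∑ b, p b ^ s := by
    obtain ⟨a, -, ha⟩ : ∃ a ∈ Finset.univ, 0 < p a :=
      Finset.exists_lt_of_sum_lt (f := fun _ => (0 : ℝ)) (by simp [hsum])
    exact Finset.sum_pos' (fun b _ => Real.rpow_nonneg (hp b) s)
      ⟨a, Finset.mem_univ a, Real.rpow_pos_of_pos ha s⟩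
  have hZ1 : ∑ a, p a ^ s / ∑ b, p b ^ s = 1 := by
    rw [← Finset.sum_div, div_self hZ.ne']
  generalize ∑ b, p b ^ s = Z at hZ hZ1 ⊢
  obtain ⟨r, hr⟩ : ∃ r : A → ℝ, ∀ a, p a ^ s / Z = r a := ⟨_, fun _ => rfl⟩
  simp only [hr] at hZ1 ⊢
  have hr0 : ∀ a, 0 ≤ r a := fun a => hr a ▸ div_nonneg (Real.rpow_nonneg (hp a) s) hZ.le
  have hrp : ∀ a, p a = 0 → r a = 0 := fun a h => by
    rw [← hr, h, Real.zero_rpow hs0.ne', zero_div]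
  have hpr : ∀ a, r a = 0 → p a = 0 := fun a h => by
    by_contra hne
    have hpos := Real.rpow_pos_of_pos ((hp a).lt_of_ne' hne) s
    rw [← hr] at h
    exact (div_pos hpos hZ).ne' h
  have hlog : ∀ a, p a ≠ 0 → Real.log (r a) = s * Real.log (p a) - Real.log Z := fun a h => by
    have hpos := (hp a).lt_of_ne' h
    rw [← hr, Real.log_div (Real.rpow_pos_of_pos hpos s).ne' hZ.ne', Real.log_rpow hpos]
  -- Any probability vector supported in that of `p` may be averaged against the formula for `log r`.
  have havg : ∀ q : A → ℝ, ∑ a, q a = 1 → (∀ a, p a = 0 → q a = 0) →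
      ∑ a, q a * Real.log (r a) = s * ∑ a, q a * Real.log (p a) - Real.log Z := by
    intro q hq hqp
    have h : ∀ a, q a * Real.log (r a) = s * (q a * Real.log (p a)) - q a * Real.log Z := by
      intro a
      by_cases h : p a = 0
      · simp [hqp a h]
      · rw [hlog a h]
        ring
    simp only [h, Finset.sum_sub_distrib, ← Finset.mul_sum, ← Finset.sum_mul, hq, one_mul]
  have h1 := sum_mul_log_le_sum_mul_log_self p r hp hr0 hsum hZ1 hpr
  have h2 := sum_mul_log_le_sum_mul_log_self r p hr0 hp hZ1 hsum hrp
  rw [havg p hsum fun _ h => h] at h1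
  rw [havg r hZ1 hrp] at h2 ⊢
  have hML : ∑ a, r a * Real.log (p a) ≤ ∑ a, p a * Real.log (p a) := by
    by_contra! h
    nlinarith
  nlinarith
end

section
/- (Classical policy improvement via Bellman equations.) Let S and A be finite nonempty types, P : S → A → PMF S a transition kernel, R : S → A → ℝ a reward function, and 0 ≤ γ < 1 a discount. Let π, π' : S → PMF A be policies and let V, W : S → ℝ satisfy the Bellman equation for π and for π' respectively. Define Q(s,a) = R(s,a) + γ·∑_{s'} P(s,a)(s')·V(s'). If for every state s one has ∑_a π'(s)(a)·Q(s,a) ≥ V(s), then W(s) ≥ V(s) for every state s. -/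
/-!
A minimum principle proves the comparison. Both `W` and the hypothesis on `Q` involve the same
policy `π'`, so subtracting them gives `W s - V s ≥ γ * 𝔼 [W s' - V s']`, where `s'` is the state
reached from `s` in one step under `π'`. At a state minimising `W - V`, with minimum `m`, the
expectation is at least `m`, hence `m ≥ γ * m`, and `γ < 1` forces `m ≥ 0`.
-/

open scoped BigOperators

/-- `V` satisfies the Bellman equation for policy `π` in the MDP `(P, R, γ)`:
for all `s`, `V s = ∑ a, π s a * (R s a + γ * ∑ s', P s a s' * V s')`. -/
def SatisfiesBellman {S A : Type*} [Fintype S] [Fintype A]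
    (P : S → A → PMF S) (R : S → A → ℝ) (γ : ℝ)
    (π : S → PMF A) (V : S → ℝ) : Prop :=
  ∀ s, V s = ∑ a, (π s a).toReal *
      (R s a + γ * ∑ s', (P s a s').toReal * V s')

/-- A weighted average against a probability mass function is at least any pointwise lower
bound. -/
lemma PMF.le_sum_toReal_mul {α : Type*} [Fintype α] (p : PMF α) {f : α → ℝ} {m : ℝ}
    (h : ∀ a, m ≤ f a) : m ≤ ∑ a, (p a).toReal * f a := by
  have hp : ∑ a, (p a).toReal = 1 := by
    rw [← ENNReal.toReal_sum fun a _ => p.apply_ne_top a, ← tsum_fintype (L := .unconditional α),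
      p.tsum_coe, ENNReal.toReal_one]
  calc m = ∑ a, (p a).toReal * m := by rw [← Finset.sum_mul, hp, one_mul]
    _ ≤ ∑ a, (p a).toReal * f a :=
      Finset.sum_le_sum fun a _ => mul_le_mul_of_nonneg_left (h a) ENNReal.toReal_nonneg

/-- Classical policy improvement: if `V` is the value of `π`, `W` is the value
of `π'`, and `π'` is greedy enough that its one-step lookahead Q-value under
`V` dominates `V` at every state, then `W ≥ V` everywhere. -/
theorem policy_improvement_bellman {S A : Type*}
    [Fintype S] [Fintype A] [Nonempty S] [Nonempty A]
    (P : S → A → PMF S) (R : S → A → ℝ) (γ : ℝ)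
    (hγ0 : 0 ≤ γ) (hγ1 : γ < 1)
    (π π' : S → PMF A) (V W : S → ℝ)
    (hV : SatisfiesBellman P R γ π V)
    (hW : SatisfiesBellman P R γ π' W)
    (Q : S → A → ℝ)
    (hQ : ∀ s a, Q s a = R s a + γ * ∑ s', (P s a s').toReal * V s')
    (himp : ∀ s, ∑ a, (π' s a).toReal * Q s a ≥ V s) :
    ∀ s, W s ≥ V s := by
  obtain ⟨s₀, hs₀⟩ := Finite.exists_min fun s => W s - V s
  have hstep : γ * (W s₀ - V s₀) ≤ W s₀ - ∑ a, (π' s₀ a).toReal * Q s₀ a := by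
    have hdiff : W s₀ - ∑ a, (π' s₀ a).toReal * Q s₀ a = ∑ a, (π' s₀ a).toReal *
        (R s₀ a + γ * ∑ s', (P s₀ a s').toReal * W s' - Q s₀ a) := by
      simp only [mul_sub, Finset.sum_sub_distrib, ← hW s₀]
    rw [hdiff]
    refine (π' s₀).le_sum_toReal_mul fun a => ?_
    have hP := mul_le_mul_of_nonneg_left ((P s₀ a).le_sum_toReal_mul hs₀) hγ0
    simp only [mul_sub, Finset.sum_sub_distrib] at hP
    rw [hQ]
    linarith
  have hm : 0 ≤ W s₀ - V s₀ := by
    have := himp s₀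
    by_contra! hneg
    nlinarith
  intro s
  linarith [hs₀ s]
end

section
/- (Policy improvement of the regularized operator, core of Theorem 1.) Let S and A be finite nonempty types, P : S → A → PMF S a transition kernel, R : S → A → ℝ a reward function, and 0 ≤ γ < 1 a discount. Let π_θ : S → PMF A be a policy with full support (π_θ(s)(a) > 0 for all s, a), let V : S → ℝ satisfy the Bellman equation for π_θ, and set Q(s,a) = R(s,a) + γ·∑_{s'} P(s,a)(s')·V(s'). Let β : S → ℝ with β(s) ≥ 0 for all s, and define the tilted policy π'(s)(a) = π_θ(s)(a)·exp(β(s)·Q(s,a)) / ∑_b π_θ(s)(b)·exp(β(s)·Q(s,b)). If W : S → ℝ satisfies the Bellman equation for π', then W(s) ≥ V(s) for every state s; that is, the value of the tilted policy π' = I_GMZ(π_θ, Q) dominates the value of the prior policy π_θ. -/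
/-!
Exponential tilting shifts mass towards actions with large `Q`: for a probability vector `p` with
mean `v = ∑ p Q` and `β ≥ 0`, monotonicity of `exp` gives
`exp (β Q) (Q - v) ≥ exp (β v) (Q - v)` pointwise, and averaging against `p` makes the right-hand
side vanish (`tilted_mean_ge`). Since `V s` is the `πθ`-mean of `Q s`, this says that `V` is a
subsolution of the Bellman equation for `π'`. Subsolutions lie below the solution `W` by a minimum
principle (`bellman_subsolution_le`): at a state minimizing `W - V`, with minimal value `d`, the two
relations give `d ≥ γ d`, hence `d ≥ 0` because `γ < 1`.
-/

open scoped BigOperators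

theorem pmf_sum_toReal {α : Type*} [Fintype α] (p : PMF α) : ∑ a, (p a).toReal = 1 := by
  rw [← ENNReal.toReal_sum fun a _ => p.apply_ne_top a, ← tsum_fintype (L := .unconditional α),
    p.tsum_coe, ENNReal.toReal_one]

/-- Tilting a probability vector by `exp (β q)` with `β ≥ 0` does not decrease the mean of `q`
(cleared of the normalizing denominator). -/
theorem tilted_mean_ge {A : Type*} [Fintype A] (p q : A → ℝ) (hp : ∀ a, 0 ≤ p a)
    (hp1 : ∑ a, p a = 1) (β : ℝ) (hβ : 0 ≤ β) :
    (∑ a, p a * q a) * ∑ a, p a * Real.exp (β * q a) ≤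
      ∑ a, p a * Real.exp (β * q a) * q a := by
  generalize hv : ∑ a, p a * q a = v
  have key : ∀ a, p a * (Real.exp (β * v) * (q a - v)) ≤
      p a * (Real.exp (β * q a) * (q a - v)) := by
    intro a
    refine mul_le_mul_of_nonneg_left ?_ (hp a)
    rcases le_total v (q a) with h | h
    · exact mul_le_mul_of_nonneg_right
        (Real.exp_le_exp.2 (mul_le_mul_of_nonneg_left h hβ)) (sub_nonneg.2 h)
    · exact mul_le_mul_of_nonpos_right
        (Real.exp_le_exp.2 (mul_le_mul_of_nonneg_left h hβ)) (sub_nonpos.2 h)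
  have hsum := Finset.sum_le_sum fun a (_ : a ∈ Finset.univ) => key a
  have h0 : ∑ a, p a * (Real.exp (β * v) * (q a - v)) = 0 := by
    calc ∑ a, p a * (Real.exp (β * v) * (q a - v))
        = Real.exp (β * v) * (∑ a, p a * q a - v * ∑ a, p a) := by
          rw [Finset.mul_sum, ← Finset.sum_sub_distrib, Finset.mul_sum]
          exact Finset.sum_congr rfl fun a _ => by ring
      _ = 0 := by rw [hp1, hv]; ring
  have h1 : ∑ a, p a * (Real.exp (β * q a) * (q a - v)) =
      ∑ a, p a * Real.exp (β * q a) * q a - v * ∑ a, p a * Real.exp (β * q a) := by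
    rw [Finset.mul_sum, ← Finset.sum_sub_distrib]
    exact Finset.sum_congr rfl fun a _ => by ring
  linarith

/-- Comparison principle: a subsolution of the Bellman equation lies below any solution. -/
theorem bellman_subsolution_le {S A : Type*} [Fintype S] [Fintype A] [Nonempty S]
    (P : S → A → PMF S) (R : S → A → ℝ) (γ : ℝ) (hγ0 : 0 ≤ γ) (hγ1 : γ < 1)
    (π : S → PMF A) (V W : S → ℝ)
    (hV : ∀ s, V s ≤ ∑ a, (π s a).toReal * (R s a + γ * ∑ s', (P s a s').toReal * V s'))
    (hW : SatisfiesBellman P R γ π W) (s : S) : V s ≤ W s := by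
  obtain ⟨m, hm⟩ := Finite.exists_min fun s => W s - V s
  set d := W m - V m with hd
  have hP : ∀ a, ∑ s', (P m a s').toReal * V s' + d ≤ ∑ s', (P m a s').toReal * W s' := by
    intro a
    calc ∑ s', (P m a s').toReal * V s' + d
        = ∑ s', (P m a s').toReal * (V s' + d) := by
          simp only [mul_add, Finset.sum_add_distrib, ← Finset.sum_mul, pmf_sum_toReal, one_mul]
      _ ≤ ∑ s', (P m a s').toReal * W s' :=
          Finset.sum_le_sum fun s' _ => mul_le_mul_of_nonneg_left
            (by linarith [hm s']) ENNReal.toReal_nonneg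
  have hstep : V m + γ * d ≤ W m := by
    calc V m + γ * d
        ≤ ∑ a, (π m a).toReal * (R m a + γ * ∑ s', (P m a s').toReal * V s') + γ * d := by
          linarith [hV m]
      _ = ∑ a, (π m a).toReal * (R m a + γ * ∑ s', (P m a s').toReal * V s' + γ * d) := by
          simp only [mul_add _ _ (γ * d), Finset.sum_add_distrib, ← Finset.sum_mul,
            pmf_sum_toReal, one_mul]
      _ ≤ ∑ a, (π m a).toReal * (R m a + γ * ∑ s', (P m a s').toReal * W s') :=
          Finset.sum_le_sum fun a _ => mul_le_mul_of_nonneg_left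
            (by linarith [mul_le_mul_of_nonneg_left (hP a) hγ0]) ENNReal.toReal_nonneg
      _ = W m := (hW m).symm
  have hd0 : 0 ≤ d := by
    by_contra! hneg
    nlinarith
  linarith [hm s]

/-- Policy improvement of the regularized operator `I_GMZ` (core of Theorem 1):
the value `W` of the exponentially tilted policy
`π'(s)(a) ∝ π_θ(s)(a) * exp (β s * Q s a)` dominates the value `V` of the
full-support prior policy `π_θ`, where `Q` is the one-step lookahead
Q-function of `π_θ` and `β s ≥ 0`. -/
theorem tilted_policy_improvement {S A : Type*}
    [Fintype S] [Fintype A] [Nonempty S] [Nonempty A]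
    (P : S → A → PMF S) (R : S → A → ℝ) (γ : ℝ)
    (hγ0 : 0 ≤ γ) (hγ1 : γ < 1)
    (πθ : S → PMF A) (hsupp : ∀ s a, 0 < (πθ s a).toReal)
    (V : S → ℝ) (hV : SatisfiesBellman P R γ πθ V)
    (Q : S → A → ℝ)
    (hQ : ∀ s a, Q s a = R s a + γ * ∑ s', (P s a s').toReal * V s')
    (β : S → ℝ) (hβ : ∀ s, 0 ≤ β s)
    (π' : S → PMF A)
    (hπ' : ∀ s a, (π' s a).toReal =
      (πθ s a).toReal * Real.exp (β s * Q s a) /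
        ∑ b, (πθ s b).toReal * Real.exp (β s * Q s b))
    (W : S → ℝ) (hW : SatisfiesBellman P R γ π' W) :
    ∀ s, W s ≥ V s := by
  intro s
  refine bellman_subsolution_le P R γ hγ0 hγ1 π' V W (fun s => ?_) hW s
  have hVs : V s = ∑ a, (πθ s a).toReal * Q s a := by
    rw [hV s]
    simp only [hQ]
  have hZ : 0 < ∑ b, (πθ s b).toReal * Real.exp (β s * Q s b) :=
    Finset.sum_pos (fun b _ => mul_pos (hsupp s b) (Real.exp_pos _)) Finset.univ_nonempty
  have hmean := tilted_mean_ge (fun a => (πθ s a).toReal) (Q s)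
    (fun _ => ENNReal.toReal_nonneg) (pmf_sum_toReal _) (β s) (hβ s)
  simp only [← hQ, hπ', div_mul_eq_mul_div]
  rw [← Finset.sum_div, le_div_iff₀ hZ, hVs]
  exact hmean
end

section
/- (Lemma: the expected bootstrapped return equals the value of the selection policy.) Let S and A be finite nonempty types, P : S → A → PMF S a transition kernel, R : S → A → ℝ a reward function, γ ∈ ℝ a discount, g : S → ℝ a terminal value, π : S → PMF A a policy, T ≥ 1, and s₁ ∈ S. Then the expectation of the bootstrapped discounted return over length-T trajectories from s₁ under π equals the T-step value of π: ∑_τ Prob_π(τ)·(∑_{t=1}^T γ^{t-1}·R(s_t,a_t) + γ^T·g(s_{T+1})) = V_T^π(s₁), where the sum ranges over all length-T trajectories τ = (s₁,a₁,s₂,…,s_T,a_T,s_{T+1}) starting at s₁. -/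
/-!
The proof is by induction on the horizon, conditioning on the first step. A trajectory of length
`T + 1` from `s` is a first action `a`, a first successor `s'` and a trajectory of length `T` from
`s'`. Under this splitting the probability factors as `π s a * P s a s'` times the probability of
the tail (`trajProb_cons`), and the return is `R s a` plus `γ` times the return of the tail
(`trajReturn_cons`). As the tail probabilities sum to one (`sum_trajProb`), the expected return
satisfies the recursion that defines `stepValue`.
-/

open scoped BigOperators

/-- The state sequence of a length-`T` trajectory determined by the start
state `s₁` and the list of next states `nxt`: `stateSeq s₁ nxt 0 = s₁` and
`stateSeq s₁ nxt (t+1) = nxt t` for `t < T` (junk value `s₁` beyond `T`). -/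
def stateSeq {S : Type*} {T : ℕ} (s₁ : S) (nxt : Fin T → S) : ℕ → S
  | 0 => s₁
  | t + 1 => if h : t < T then nxt ⟨t, h⟩ else s₁

/-- The `h`-step value of policy `π` with terminal value `g`:
`V_0 = g`, `V_{h+1}(s) = ∑ a, π s a * (R s a + γ * ∑ s', P s a s' * V_h s')`. -/
noncomputable def stepValue {S A : Type*} [Fintype S] [Fintype A]
    (P : S → A → PMF S) (R : S → A → ℝ) (γ : ℝ) (g : S → ℝ)
    (π : S → PMF A) : ℕ → S → ℝ
  | 0, s => g s
  | h + 1, s =>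
      ∑ a, (π s a).toReal *
        (R s a + γ * ∑ s', (P s a s').toReal * stepValue P R γ g π h s')

/-- The probability under `π` of the length-`T` trajectory from `s` with actions `τ.1` and
successor states `τ.2`. -/
noncomputable def trajProb {S A : Type*} (P : S → A → PMF S) (π : S → PMF A) {T : ℕ} (s : S)
    (τ : (Fin T → A) × (Fin T → S)) : ℝ :=
  ∏ t : Fin T, (π (stateSeq s τ.2 t) (τ.1 t)).toReal *
    (P (stateSeq s τ.2 t) (τ.1 t) (stateSeq s τ.2 ((t : ℕ) + 1))).toReal

/-- The bootstrapped discounted return of the length-`T` trajectory from `s` with actions `τ.1`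
and successor states `τ.2`. -/
noncomputable def trajReturn {S A : Type*} (R : S → A → ℝ) (γ : ℝ) (g : S → ℝ) {T : ℕ} (s : S)
    (τ : (Fin T → A) × (Fin T → S)) : ℝ :=
  (∑ t : Fin T, γ ^ (t : ℕ) * R (stateSeq s τ.2 t) (τ.1 t)) + γ ^ T * g (stateSeq s τ.2 T)

/-- Dropping the first step shifts the state sequence; beyond index `T + 1` this would fail, since
the two sides then take the different default values `s` and `s'`. -/
lemma stateSeq_cons_succ {S : Type*} {T : ℕ} (s s' : S) (ss : Fin T → S) {t : ℕ} (ht : t ≤ T) :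
    stateSeq s (Fin.cons s' ss : Fin (T + 1) → S) (t + 1) = stateSeq s' ss t := by
  cases t with
  | zero => simp [stateSeq]
  | succ t =>
    have h1 : t < T := ht
    have h2 : t + 1 < T + 1 := Nat.succ_lt_succ h1
    simp only [stateSeq, h1, h2, dif_pos]
    exact Fin.cons_succ (α := fun _ => S) s' ss ⟨t, h1⟩

lemma trajProb_cons {S A : Type*} (P : S → A → PMF S) (π : S → PMF A) {T : ℕ} (s : S)
    (a : A) (s' : S) (τ : (Fin T → A) × (Fin T → S)) :
    trajProb P π (T := T + 1) s (Fin.cons a τ.1, Fin.cons s' τ.2) =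
      (π s a).toReal * (P s a s').toReal * trajProb P π s' τ := by
  unfold trajProb
  rw [Fin.prod_univ_succ]
  -- The factors at `t = 0` agree definitionally, which leaves the product over `t ≥ 1`.
  congr 1
  refine Finset.prod_congr rfl fun t _ => ?_
  simp only [Fin.val_succ, Fin.cons_succ, stateSeq_cons_succ s s' τ.2 t.isLt.le,
    stateSeq_cons_succ s s' τ.2 (Nat.succ_le_of_lt t.isLt)]

lemma trajReturn_cons {S A : Type*} (R : S → A → ℝ) (γ : ℝ) (g : S → ℝ) {T : ℕ} (s : S)
    (a : A) (s' : S) (τ : (Fin T → A) × (Fin T → S)) :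
    trajReturn R γ g (T := T + 1) s (Fin.cons a τ.1, Fin.cons s' τ.2) =
      R s a + γ * trajReturn R γ g s' τ := by
  unfold trajReturn
  rw [Fin.sum_univ_succ, mul_add, Finset.mul_sum]
  simp only [Fin.val_zero, Fin.cons_zero, Fin.val_succ, Fin.cons_succ, pow_zero, one_mul,
    stateSeq_cons_succ s s' τ.2 le_rfl, stateSeq_cons_succ s s' τ.2 (Fin.isLt _).le,
    pow_succ', mul_assoc, add_assoc]
  rfl

/-- Summing over trajectories of length `T + 1` means summing over the first action, the first
successor state and the remaining trajectory. -/
lemma sum_traj_succ {S A : Type*} [Fintype S] [Fintype A] {T : ℕ}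
    (f : (Fin (T + 1) → A) × (Fin (T + 1) → S) → ℝ) :
    ∑ τ, f τ = ∑ a, ∑ s', ∑ τ : (Fin T → A) × (Fin T → S),
      f (Fin.cons a τ.1, Fin.cons s' τ.2) := by
  simp only [Fintype.sum_prod_type]
  rw [← (Fin.consEquiv fun _ : Fin (T + 1) => A).sum_comp, Fintype.sum_prod_type]
  refine Finset.sum_congr rfl fun a _ => ?_
  rw [Finset.sum_comm]
  simp only [← (Fin.consEquiv fun _ : Fin (T + 1) => S).sum_comp, Fintype.sum_prod_type]
  exact Finset.sum_congr rfl fun s' _ => Finset.sum_comm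

lemma sum_toReal_pmf {α : Type*} [Fintype α] (p : PMF α) : ∑ x, (p x).toReal = 1 := by
  rw [← ENNReal.toReal_sum fun x _ => p.apply_ne_top x, ← tsum_fintype (L := .unconditional α),
    p.tsum_coe, ENNReal.toReal_one]

lemma sum_trajProb {S A : Type*} [Fintype S] [Fintype A] (P : S → A → PMF S) (π : S → PMF A)
    (T : ℕ) (s : S) : ∑ τ : (Fin T → A) × (Fin T → S), trajProb P π s τ = 1 := by
  induction T generalizing s with
  | zero => simp [trajProb]
  | succ T ih =>
    simp only [sum_traj_succ, trajProb_cons, ← Finset.mul_sum, ih, mul_one, sum_toReal_pmf]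

/-- The identity holds for every horizon, including `T = 0`. -/
lemma sum_trajProb_mul_trajReturn {S A : Type*} [Fintype S] [Fintype A] (P : S → A → PMF S)
    (R : S → A → ℝ) (γ : ℝ) (g : S → ℝ) (π : S → PMF A) (T : ℕ) (s : S) :
    ∑ τ : (Fin T → A) × (Fin T → S), trajProb P π s τ * trajReturn R γ g s τ =
      stepValue P R γ g π T s := by
  induction T generalizing s with
  | zero => simp [trajProb, trajReturn, stateSeq, stepValue]
  | succ T ih =>
    simp only [sum_traj_succ, trajProb_cons, trajReturn_cons, stepValue]
    refine Finset.sum_congr rfl fun a _ => ?_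
    -- Given the first step, the tail has total mass one and expected return `V_T(s')`.
    have tail (s' : S) : ∑ τ : (Fin T → A) × (Fin T → S),
        (π s a).toReal * (P s a s').toReal * trajProb P π s' τ *
          (R s a + γ * trajReturn R γ g s' τ) =
        (π s a).toReal * ((P s a s').toReal * R s a +
          γ * ((P s a s').toReal * stepValue P R γ g π T s')) := by
      calc
        _ = (π s a).toReal * (P s a s').toReal *
            (R s a * ∑ τ : (Fin T → A) × (Fin T → S), trajProb P π s' τ +
              γ * ∑ τ : (Fin T → A) × (Fin T → S),
                trajProb P π s' τ * trajReturn R γ g s' τ) := by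
          rw [Finset.mul_sum, Finset.mul_sum, ← Finset.sum_add_distrib, Finset.mul_sum]
          exact Finset.sum_congr rfl fun τ _ => by ring
        _ = _ := by rw [sum_trajProb, ih]; ring
    simp only [tail, ← Finset.mul_sum, Finset.sum_add_distrib, ← Finset.sum_mul,
      sum_toReal_pmf, one_mul]

/-- The expected bootstrapped discounted return over all length-`T`
trajectories from `s₁` under policy `π` equals the `T`-step value of `π`.
A trajectory is encoded by its actions `τ.1 : Fin T → A` and its successor
states `τ.2 : Fin T → S`. -/
theorem expected_return_eq_value {S A : Type*}
    [Fintype S] [Fintype A] [Nonempty S] [Nonempty A]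
    (P : S → A → PMF S) (R : S → A → ℝ) (γ : ℝ) (g : S → ℝ)
    (π : S → PMF A) (T : ℕ) (hT : 1 ≤ T) (s₁ : S) :
    ∑ τ : (Fin T → A) × (Fin T → S),
      (∏ t : Fin T,
        (π (stateSeq s₁ τ.2 t) (τ.1 t)).toReal *
          (P (stateSeq s₁ τ.2 t) (τ.1 t) (stateSeq s₁ τ.2 ((t : ℕ) + 1))).toReal) *
      ((∑ t : Fin T, γ ^ (t : ℕ) * R (stateSeq s₁ τ.2 t) (τ.1 t)) +
        γ ^ T * g (stateSeq s₁ τ.2 T))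
      = stepValue P R γ g π T s₁ := by
  exact sum_trajProb_mul_trajReturn P R γ g π T s₁
end

section
/- (Theorem 4: unbiased weighted backpropagation via sequential importance sampling.) Let S and A be finite nonempty types, P : S → A → PMF S a transition kernel, R : S → A → ℝ a reward function, γ ∈ ℝ a discount, g : S → ℝ a terminal value, T ≥ 1, and s₁ ∈ S. For each t ∈ {1,…,T} let π_t, π̂_t : S → PMF A be a target and a proposal policy with the support condition π̂_t(s)(a) > 0 whenever π_t(s)(a) > 0. For a length-T trajectory τ = (s₁,a₁,…,s_T,a_T,s_{T+1}), let Prob_{π̂}(τ) = ∏_{t=1}^T π̂_t(s_t)(a_t)·P(s_t,a_t)(s_{t+1}), and on trajectories with Prob_{π̂}(τ) > 0 define the importance weight w(τ) = ∏_{t=1}^T π_t(s_t)(a_t)/π̂_t(s_t)(a_t). Define the target values backwards by V_{T+1}(s) = g(s) and V_t(s) = ∑_a π_t(s)(a)·(R(s,a) + γ·∑_{s'} P(s,a)(s')·V_{t+1}(s')). Then the weighted expected bootstrapped return under the proposal equals the value of the target: ∑_{τ : Prob_{π̂}(τ) > 0} Prob_{π̂}(τ)·w(τ)·(∑_{t=1}^T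 γ^{t-1}·R(s_t,a_t) + γ^T·g(s_{T+1})) = V_1(s₁). -/
/-!
Multiplying the proposal probability by the importance weight cancels the proposal: on a trajectory
of positive proposal probability the product is the target probability `∏ π_t · P`. On the other
trajectories some factor `π̂_t · P` vanishes, hence by the support condition so does `π_t · P`, and
the target probability is zero. The left-hand side is therefore the expected return under the
target policies (`weighted_term`, trajectory by trajectory).

That this expectation equals the backward value is proved by splitting off the first transition.
The return of a trajectory is the first reward plus `γ` times the return of its tail, so the
induction is run on affine functions `c + d · return` (`target_expectation_affine`): this class is
closed under the splitting, and it contains the constants, so that the normalisation of the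
trajectory distribution needs no separate proof.
-/

open scoped BigOperators

/-- The backward target values of the time-dependent target policies
`π 0, …, π (T-1)`: `valSteps P R γ g π T k` is the value with `k` steps
remaining, i.e. `V_{T-k+1}` in one-based notation; `valSteps P R γ g π T T`
is `V_1` and `valSteps P R γ g π T 0 = g` is `V_{T+1}`. -/
noncomputable def valSteps {S A : Type*} [Fintype S] [Fintype A]
    (P : S → A → PMF S) (R : S → A → ℝ) (γ : ℝ) (g : S → ℝ)
    (π : ℕ → S → PMF A) (T : ℕ) : ℕ → S → ℝ
  | 0, s => g s
  | k + 1, s =>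
      ∑ a, (π (T - (k + 1)) s a).toReal *
        (R s a + γ * ∑ s', (P s a s').toReal * valSteps P R γ g π T k s')

theorem stateSeq_cons {S : Type*} {T : ℕ} (s s' : S) (n : Fin T → S) (t : ℕ) (ht : t ≤ T) :
    stateSeq s (Fin.cons s' n : Fin (T + 1) → S) (t + 1) = stateSeq s' n t := by
  cases t with
  | zero => simp [stateSeq]
  | succ t =>
    have h1 : t + 1 < T + 1 := by omega
    have h2 : t < T := by omega
    simp only [stateSeq, h1, h2, dif_pos]
    exact Fin.cons_succ (α := fun _ => S) s' n ⟨t, h2⟩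

/-- With `k ≤ T` steps of the horizon `T + 1` remaining, the value only involves the policies at
times `T + 1 - k, …, T`, so deleting the policy at time `0` and shortening the horizon by one does not change it. -/
theorem valSteps_shift {S A : Type*} [Fintype S] [Fintype A]
    (P : S → A → PMF S) (R : S → A → ℝ) (γ : ℝ) (g : S → ℝ)
    (π : ℕ → S → PMF A) (T k : ℕ) (hk : k ≤ T) (s : S) :
    valSteps P R γ g π (T + 1) k s = valSteps P R γ g (fun t => π (t + 1)) T k s := by
  induction k generalizing s with
  | zero => rfl
  | succ k ih =>
    have h : T + 1 - (k + 1) = T - (k + 1) + 1 := by omega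
    simp only [valSteps, h, ih (by omega)]

theorem sum_fin_cons {α : Type*} [Fintype α] {T : ℕ} (f : (Fin (T + 1) → α) → ℝ) :
    ∑ x, f x = ∑ a, ∑ y : Fin T → α, f (Fin.cons a y) := by
  rw [← Fintype.sum_prod_type']
  exact (Fintype.sum_equiv (Fin.consEquiv (fun _ => α)) _ _ (fun _ => rfl)).symm

/-- Under the target trajectory distribution, `c + d · return` has expectation
`c + d · V_1(s₁)`. -/
theorem target_expectation_affine {S A : Type*} [Fintype S] [Fintype A]
    (P : S → A → PMF S) (R : S → A → ℝ) (γ : ℝ) (g : S → ℝ)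
    (T : ℕ) (π : ℕ → S → PMF A) (s₁ : S) (c d : ℝ) :
    ∑ x : Fin T → A, ∑ n : Fin T → S,
      (∏ t : Fin T, (π t (stateSeq s₁ n t) (x t)).toReal *
        (P (stateSeq s₁ n t) (x t) (stateSeq s₁ n ((t : ℕ) + 1))).toReal) *
      (c + d * ((∑ t : Fin T, γ ^ (t : ℕ) * R (stateSeq s₁ n t) (x t)) +
        γ ^ T * g (stateSeq s₁ n T)))
      = c + d * valSteps P R γ g π T T s₁ := by
  induction T generalizing π s₁ c d with
  | zero => simp [stateSeq, valSteps]
  | succ T ih =>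
    have key : ∀ (a : A) (s' : S), ∑ x : Fin T → A, ∑ n : Fin T → S,
        (∏ t : Fin (T + 1),
          (π t (stateSeq s₁ (Fin.cons s' n : Fin (T + 1) → S) t)
            ((Fin.cons a x : Fin (T + 1) → A) t)).toReal *
          (P (stateSeq s₁ (Fin.cons s' n : Fin (T + 1) → S) t)
            ((Fin.cons a x : Fin (T + 1) → A) t)
            (stateSeq s₁ (Fin.cons s' n : Fin (T + 1) → S) ((t : ℕ) + 1))).toReal) *
        (c + d * ((∑ t : Fin (T + 1), γ ^ (t : ℕ) *
            R (stateSeq s₁ (Fin.cons s' n : Fin (T + 1) → S) t)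
              ((Fin.cons a x : Fin (T + 1) → A) t)) +
          γ ^ (T + 1) * g (stateSeq s₁ (Fin.cons s' n : Fin (T + 1) → S) (T + 1))))
        = (π 0 s₁ a).toReal * (P s₁ a s').toReal *
          ((c + d * R s₁ a) + (d * γ) * valSteps P R γ g π (T + 1) T s') := by
      intro a s'
      rw [valSteps_shift P R γ g π T T le_rfl, ← ih (fun t => π (t + 1)) s', Finset.mul_sum]
      refine Finset.sum_congr rfl fun x _ => ?_
      rw [Finset.mul_sum]
      refine Finset.sum_congr rfl fun n _ => ?_
      have h0 : stateSeq s₁ (Fin.cons s' n : Fin (T + 1) → S) 0 = s₁ := rfl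
      have h1 : ∀ t : Fin T, stateSeq s₁ (Fin.cons s' n : Fin (T + 1) → S) ((t : ℕ) + 1)
          = stateSeq s' n t := fun t => stateSeq_cons _ _ _ _ t.2.le
      have h2 : ∀ t : Fin T, stateSeq s₁ (Fin.cons s' n : Fin (T + 1) → S) ((t : ℕ) + 1 + 1)
          = stateSeq s' n ((t : ℕ) + 1) := fun t => stateSeq_cons _ _ _ _ t.2
      have h3 := stateSeq_cons s₁ s' n 0 (Nat.zero_le _)
      have h4 : ∑ t : Fin T, γ ^ ((t : ℕ) + 1) * R (stateSeq s' n t) (x t)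
          = γ * ∑ t : Fin T, γ ^ (t : ℕ) * R (stateSeq s' n t) (x t) := by
        rw [Finset.mul_sum]
        exact Finset.sum_congr rfl fun t _ => by ring
      have h5 : stateSeq s' n 0 = s' := rfl
      rw [Fin.prod_univ_succ, Fin.sum_univ_succ]
      simp only [Fin.cons_zero, Fin.cons_succ, Fin.val_zero, Fin.val_succ, h0, h1, h2, h3, h4, h5,
        stateSeq_cons s₁ s' n T le_rfl]
      ring
    have hval : valSteps P R γ g π (T + 1) (T + 1) s₁ = ∑ a, (π 0 s₁ a).toReal *
        (R s₁ a + γ * ∑ s', (P s₁ a s').toReal * valSteps P R γ g π (T + 1) T s') := by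
      rw [valSteps, Nat.sub_self]
    rw [sum_fin_cons]
    simp only [sum_fin_cons (α := S)]
    calc _ = ∑ a, ∑ s', (π 0 s₁ a).toReal * (P s₁ a s').toReal *
          ((c + d * R s₁ a) + (d * γ) * valSteps P R γ g π (T + 1) T s') := by
          refine Finset.sum_congr rfl fun a _ => ?_
          rw [Finset.sum_comm]
          exact Finset.sum_congr rfl fun s' _ => key a s'
      _ = ∑ a, ((π 0 s₁ a).toReal * c + d * ((π 0 s₁ a).toReal *
          (R s₁ a + γ * ∑ s', (P s₁ a s').toReal * valSteps P R γ g π (T + 1) T s'))) := by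
          refine Finset.sum_congr rfl fun a _ => ?_
          calc _ = ∑ s', ((π 0 s₁ a).toReal * (c + d * R s₁ a) * (P s₁ a s').toReal +
                (π 0 s₁ a).toReal * d * γ *
                  ((P s₁ a s').toReal * valSteps P R γ g π (T + 1) T s')) :=
                Finset.sum_congr rfl fun s' _ => by ring
            _ = _ := by
                rw [Finset.sum_add_distrib, ← Finset.mul_sum, ← Finset.mul_sum, pmf_sum_toReal]
                ring
      _ = _ := by
          rw [Finset.sum_add_distrib, ← Finset.sum_mul, ← Finset.mul_sum, pmf_sum_toReal, one_mul,
            hval]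

/-- Importance weighting turns the proposal contribution of a single trajectory into its target
contribution. Here `p`, `q`, `r` are the target, proposal and
transition probabilities along one trajectory, and `G` is its return. -/
theorem weighted_term {ι : Type*} [Fintype ι] (p q r : ι → ℝ) (G : ℝ)
    (hp : ∀ t, 0 ≤ p t) (hq : ∀ t, 0 ≤ q t) (hr : ∀ t, 0 ≤ r t)
    (h : ∀ t, 0 < p t → 0 < q t) :
    (if 0 < ∏ t, q t * r t then (∏ t, q t * r t) * (∏ t, p t / q t) * G else 0)
      = (∏ t, p t * r t) * G := by
  split_ifs with hpos
  · rw [← Finset.prod_mul_distrib]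
    congr 1
    refine Finset.prod_congr rfl fun t _ => ?_
    have : q t ≠ 0 := fun h0 => hpos.ne' (Finset.prod_eq_zero (Finset.mem_univ t) (by simp [h0]))
    field_simp
  · have h0 : ∏ t, q t * r t = 0 :=
      le_antisymm (not_lt.1 hpos) (Finset.prod_nonneg fun t _ => mul_nonneg (hq t) (hr t))
    obtain ⟨t, -, ht⟩ := Finset.prod_eq_zero_iff.1 h0
    have : p t * r t = 0 := by
      rcases mul_eq_zero.1 ht with hqt | hrt
      · have : p t = 0 := le_antisymm (not_lt.1 fun hlt => (h t hlt).ne' hqt) (hp t)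
        rw [this, zero_mul]
      · rw [hrt, mul_zero]
    rw [Finset.prod_eq_zero (Finset.mem_univ t) this, zero_mul]

/-- Theorem 4 (unbiased weighted backpropagation via sequential importance
sampling): summing, over all trajectories with positive probability under the
step-dependent proposal policies `πhat t`, the proposal probability times
the importance weight `∏ t, π t / πhat t` times the bootstrapped discounted
return, yields exactly the value `V_1(s₁)` of the target policies `π t`. -/
theorem weighted_return_unbiased {S A : Type*}
    [Fintype S] [Fintype A] [Nonempty S] [Nonempty A]
    (P : S → A → PMF S) (R : S → A → ℝ) (γ : ℝ) (g : S → ℝ)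
    (T : ℕ) (hT : 1 ≤ T) (s₁ : S)
    (π πhat : ℕ → S → PMF A)
    (hsupp : ∀ t, t < T → ∀ s a,
      0 < (π t s a).toReal → 0 < (πhat t s a).toReal) :
    ∑ τ ∈ Finset.univ.filter (fun τ : (Fin T → A) × (Fin T → S) =>
        0 < ∏ t : Fin T,
          (πhat t (stateSeq s₁ τ.2 t) (τ.1 t)).toReal *
            (P (stateSeq s₁ τ.2 t) (τ.1 t) (stateSeq s₁ τ.2 ((t : ℕ) + 1))).toReal),
      (∏ t : Fin T,
        (πhat t (stateSeq s₁ τ.2 t) (τ.1 t)).toReal *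
          (P (stateSeq s₁ τ.2 t) (τ.1 t) (stateSeq s₁ τ.2 ((t : ℕ) + 1))).toReal) *
      (∏ t : Fin T,
        (π t (stateSeq s₁ τ.2 t) (τ.1 t)).toReal /
          (πhat t (stateSeq s₁ τ.2 t) (τ.1 t)).toReal) *
      ((∑ t : Fin T, γ ^ (t : ℕ) * R (stateSeq s₁ τ.2 t) (τ.1 t)) +
        γ ^ T * g (stateSeq s₁ τ.2 T))
      = valSteps P R γ g π T T s₁ := by
  have hmain := target_expectation_affine P R γ g T π s₁ 0 1
  simp only [zero_add, one_mul] at hmain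
  rw [← hmain, ← Fintype.sum_prod_type', Finset.sum_filter]
  refine Finset.sum_congr rfl fun τ _ => ?_
  exact weighted_term (fun t : Fin T => (π t (stateSeq s₁ τ.2 t) (τ.1 t)).toReal)
    (fun t : Fin T => (πhat t (stateSeq s₁ τ.2 t) (τ.1 t)).toReal)
    (fun t : Fin T =>
      (P (stateSeq s₁ τ.2 t) (τ.1 t) (stateSeq s₁ τ.2 ((t : ℕ) + 1))).toReal) _
    (fun _ => ENNReal.toReal_nonneg) (fun _ => ENNReal.toReal_nonneg)
    (fun _ => ENNReal.toReal_nonneg) (fun t => hsupp t t.2 _ _)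
end
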